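/- arXiv:2310.00526 — 4 statements merged into one kernel-verified Lean document; each statement's English description precedes it below -/
import Mathlib

section
/- Let N and F be natural numbers, let C, A_1, …, A_F be real symmetric N×N matrices, let b ∈ ℝ^F, λ ∈ ℝ^F, let Y ≥ 0 be a real number, and let X̃ be a real positive semidefinite N×N matrix. Define ∇F_λ := C + Σ_{i=1}^F λ_i A_i and F_λ(X̃) := ⟨C, X̃⟩ + Σ_{i=1}^F λ_i(⟨A_i, X̃⟩ − b_i). If λ_min(∇F_λ) ≤ 0, then every real positive semidefinite N×N matrix X satisfying ⟨A_i, X⟩ = b_i for all i = 1,…,F and Tr(X) ≤ Y obeys ⟨C, X⟩ ≥ F_λ(X̃) − ⟨∇F_λ, X̃⟩ + λ_min(∇F_λ)·Y. -/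
open Matrix BigOperators

/-- Frobenius inner product `⟨A, B⟩ = Tr(Aᵀ B)` of two square real matrices. -/
noncomputable def frobInner {N : ℕ} (A B : Matrix (Fin N) (Fin N) ℝ) : ℝ :=
  (Aᵀ * B).trace

/-- Least eigenvalue of a real symmetric (Hermitian) matrix (junk value `0` otherwise). -/
noncomputable def lambdaMin {N : ℕ} (M : Matrix (Fin N) (Fin N) ℝ) : ℝ :=
  if h : M.IsHermitian then ⨅ i, h.eigenvalues i else 0

/-- Rayleigh-type bound: pairing a symmetric matrix with a positive semidefinite one is bounded
below by the least eigenvalue times the trace. -/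
theorem lambdaMin_mul_trace_le_frobInner {N : ℕ} {M X : Matrix (Fin N) (Fin N) ℝ}
    (hM : M.IsHermitian) (hX : X.PosSemidef) : lambdaMin M * X.trace ≤ frobInner M X := by
  let U : Matrix (Fin N) (Fin N) ℝ := (hM.eigenvectorUnitary).1
  have hspec : M = U * diagonal hM.eigenvalues * star U := by
    simpa [Unitary.conjStarAlgAut_apply] using hM.spectral_theorem
  have hUU : U * star U = 1 := Unitary.coe_mul_star_self hM.eigenvectorUnitary
  have hP : (star U * X * U).PosSemidef := hX.conjTranspose_mul_mul_same U
  have htrace : X.trace = (star U * X * U).trace := by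
    rw [trace_mul_cycle, hUU, one_mul]
  have hinner : frobInner M X = ∑ i, hM.eigenvalues i * (star U * X * U) i i := by
    have hMt : Mᵀ = M := by rw [← conjTranspose_eq_transpose_of_trivial, hM.eq]
    calc frobInner M X = (U * (diagonal hM.eigenvalues * (star U * X))).trace := by
          rw [frobInner, hMt]
          conv_lhs => rw [hspec]
          simp only [Matrix.mul_assoc]
      _ = (diagonal hM.eigenvalues * (star U * X * U)).trace := by
          rw [trace_mul_comm]
          simp only [Matrix.mul_assoc]
      _ = _ := by simp [trace, diagonal_mul]
  rw [htrace, hinner, lambdaMin, dif_pos hM, trace, Finset.mul_sum]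
  exact Finset.sum_le_sum fun i _ =>
    mul_le_mul_of_nonneg_right (ciInf_le (Set.finite_range _).bddBelow i) hP.diag_nonneg

/-- The Frobenius inner product is affine along linear combinations in its first argument. -/
theorem frobInner_add_sum_smul {N F : ℕ} (C : Matrix (Fin N) (Fin N) ℝ)
    (A : Fin F → Matrix (Fin N) (Fin N) ℝ) (lam : Fin F → ℝ) (X : Matrix (Fin N) (Fin N) ℝ) :
    frobInner (C + ∑ i, lam i • A i) X = frobInner C X + ∑ i, lam i * frobInner (A i) X := by
  simp [frobInner, transpose_sum, add_mul, Finset.sum_mul, trace_sum]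

/-- the dual-certificate lower bound. -/
theorem dual_certificate_lower_bound
    {N F : ℕ} (C : Matrix (Fin N) (Fin N) ℝ) (A : Fin F → Matrix (Fin N) (Fin N) ℝ)
    (hC : C.IsSymm) (hA : ∀ i, (A i).IsSymm)
    (b lam : Fin F → ℝ) (Y : ℝ) (hY : 0 ≤ Y)
    (Xt : Matrix (Fin N) (Fin N) ℝ) (hXt : Xt.PosSemidef)
    (hmin : lambdaMin (C + ∑ i, lam i • A i) ≤ 0)
    (X : Matrix (Fin N) (Fin N) ℝ) (hX : X.PosSemidef)
    (hfeas : ∀ i, frobInner (A i) X = b i) (htr : X.trace ≤ Y) :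
    frobInner C X ≥
      (frobInner C Xt + ∑ i, lam i * (frobInner (A i) Xt - b i))
        - frobInner (C + ∑ i, lam i • A i) Xt
        + lambdaMin (C + ∑ i, lam i • A i) * Y := by
  have hM : (C + ∑ i, lam i • A i).IsHermitian := by
    have hsymm : (C + ∑ i, lam i • A i).IsSymm := by
      simp only [IsSymm, transpose_add, transpose_sum, transpose_smul, hC.eq, (hA _).eq]
    rw [IsHermitian, conjTranspose_eq_transpose_of_trivial, hsymm.eq]
  have hbound := lambdaMin_mul_trace_le_frobInner hM hX
  have htrace := mul_le_mul_of_nonpos_left htr hmin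
  rw [frobInner_add_sum_smul C A lam X] at hbound
  rw [frobInner_add_sum_smul C A lam Xt]
  simp only [hfeas] at hbound
  simp only [mul_sub, Finset.sum_sub_distrib]
  linarith
end

section
/- Let N and F be natural numbers, let C, A_1, …, A_F be real symmetric N×N matrices, b ∈ ℝ^F, ρ ≥ 0, and B ≥ 0. Define L_ρ : Matrix N N ℝ → ℝ by L_ρ(V) := ⟨C, VᵀV⟩ + ρ·Σ_{i=1}^F (⟨A_i, VᵀV⟩ − b_i)², and define G(V) := 2VC + 4ρ·Σ_{i=1}^F (⟨A_i, VᵀV⟩ − b_i)·V A_i. Then: (i) L_ρ is differentiable at every V, and its Fréchet derivative at V applied to a matrix H equals ⟨G(V), H⟩ (so G(V) is the gradient of L_ρ with respect to the Frobenius inner product); and (ii) for all V, V' with ‖V‖_F ≤ B and ‖V'‖_F ≤ B, ‖G(V) − G(V')‖_F ≤ K·‖V − V'‖_F, where K := 2‖C‖_F + 4ρ·Σ_{i=1}^F (3B²·‖A_i‖_F² + |b_i|·‖A_i‖_F). -/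
open Matrix BigOperators

attribute [local instance] Matrix.frobeniusSeminormedAddCommGroup
  Matrix.frobeniusNormedAddCommGroup Matrix.frobeniusNormedSpace

/-- The penalized Lagrangian `L_ρ(V) = ⟨C, VᵀV⟩ + ρ Σ_i (⟨A_i, VᵀV⟩ - b_i)²`. -/
noncomputable def penalizedLagrangian {N F : ℕ} (C : Matrix (Fin N) (Fin N) ℝ)
    (A : Fin F → Matrix (Fin N) (Fin N) ℝ) (b : Fin F → ℝ) (ρ : ℝ)
    (V : Matrix (Fin N) (Fin N) ℝ) : ℝ :=
  frobInner C (Vᵀ * V) + ρ * ∑ i, (frobInner (A i) (Vᵀ * V) - b i) ^ 2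

/-- The gradient `G(V) = 2VC + 4ρ Σ_i (⟨A_i, VᵀV⟩ - b_i) V A_i`. -/
noncomputable def penalizedGrad {N F : ℕ} (C : Matrix (Fin N) (Fin N) ℝ)
    (A : Fin F → Matrix (Fin N) (Fin N) ℝ) (b : Fin F → ℝ) (ρ : ℝ)
    (V : Matrix (Fin N) (Fin N) ℝ) : Matrix (Fin N) (Fin N) ℝ :=
  (2 : ℝ) • (V * C) + (4 * ρ) • ∑ i, (frobInner (A i) (Vᵀ * V) - b i) • (V * A i)

lemma frobInner_eq_sum {N : ℕ} (X Y : Matrix (Fin N) (Fin N) ℝ) :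
    frobInner X Y = ∑ p : Fin N × Fin N, X p.1 p.2 * Y p.1 p.2 := by
  rw [frobInner, Fintype.sum_prod_type_right]
  simp [Matrix.trace, Matrix.mul_apply]

lemma frobenius_norm_sq_eq_sum {N : ℕ} (X : Matrix (Fin N) (Fin N) ℝ) :
    ‖X‖ ^ 2 = ∑ p : Fin N × Fin N, X p.1 p.2 ^ 2 := by
  rw [Matrix.frobenius_norm_def, ← Real.sqrt_eq_rpow, Real.sq_sqrt (by positivity),
    Fintype.sum_prod_type]
  simp

/-- Cauchy–Schwarz for the Frobenius inner product. -/
lemma abs_frobInner_le {N : ℕ} (X Y : Matrix (Fin N) (Fin N) ℝ) :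
    |frobInner X Y| ≤ ‖X‖ * ‖Y‖ := by
  apply abs_le_of_sq_le_sq _ (by positivity)
  rw [mul_pow, frobenius_norm_sq_eq_sum, frobenius_norm_sq_eq_sum, frobInner_eq_sum]
  exact Finset.sum_mul_sq_le_sq_mul_sq _ _ _

/-- The continuous linear functional `⟨X, ·⟩`. -/
noncomputable def frobInnerCLM {N : ℕ} (X : Matrix (Fin N) (Fin N) ℝ) :
    Matrix (Fin N) (Fin N) ℝ →L[ℝ] ℝ :=
  LinearMap.mkContinuous
    { toFun := frobInner X
      map_add' := fun Y Z => by simp [frobInner, Matrix.mul_add]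
      map_smul' := fun c Y => by simp [frobInner] }
    ‖X‖ (abs_frobInner_le X)

lemma frobInnerCLM_apply {N : ℕ} (X Y : Matrix (Fin N) (Fin N) ℝ) :
    frobInnerCLM X Y = frobInner X Y := rfl

lemma frobInner_transpose_mul {N : ℕ} (M V H : Matrix (Fin N) (Fin N) ℝ) :
    frobInner M (Vᵀ * H) = frobInner (V * M) H := by
  simp [frobInner, Matrix.transpose_mul, Matrix.mul_assoc]

lemma frobInner_transpose_mul_of_isSymm {N : ℕ} {M : Matrix (Fin N) (Fin N) ℝ}
    (hM : M.IsSymm) (V H : Matrix (Fin N) (Fin N) ℝ) :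
    frobInner M (Hᵀ * V) = frobInner (V * M) H := by
  rw [frobInner, ← Matrix.trace_transpose, frobInner, Matrix.transpose_mul,
    Matrix.transpose_mul, Matrix.transpose_mul, Matrix.transpose_transpose,
    Matrix.transpose_transpose, hM.eq, Matrix.trace_mul_comm, Matrix.mul_assoc]

lemma frobInner_gram_add {N : ℕ} {M : Matrix (Fin N) (Fin N) ℝ} (hM : M.IsSymm)
    (V H : Matrix (Fin N) (Fin N) ℝ) :
    frobInner M ((V + H)ᵀ * (V + H)) =
      frobInner M (Vᵀ * V) + 2 * frobInner (V * M) H + frobInner M (Hᵀ * H) := by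
  have h : (V + H)ᵀ * (V + H) = Vᵀ * V + Vᵀ * H + Hᵀ * V + Hᵀ * H := by
    rw [Matrix.transpose_add]; noncomm_ring
  rw [h]
  simp only [← frobInnerCLM_apply M, map_add]
  simp only [frobInnerCLM_apply, frobInner_transpose_mul M V H,
    frobInner_transpose_mul_of_isSymm hM V H]
  ring

lemma abs_frobInner_gram_le {N : ℕ} (M H : Matrix (Fin N) (Fin N) ℝ) :
    |frobInner M (Hᵀ * H)| ≤ ‖M‖ * ‖H‖ ^ 2 := by
  refine (abs_frobInner_le _ _).trans ?_
  have h := Matrix.frobenius_norm_mul Hᵀ H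
  rw [Matrix.frobenius_norm_transpose, ← sq] at h
  gcongr

lemma hasFDerivAt_frobInner_gram {N : ℕ} {M : Matrix (Fin N) (Fin N) ℝ} (hM : M.IsSymm)
    (V : Matrix (Fin N) (Fin N) ℝ) :
    HasFDerivAt (fun W : Matrix (Fin N) (Fin N) ℝ => frobInner M (Wᵀ * W))
      ((2 : ℝ) • frobInnerCLM (V * M)) V := by
  refine hasFDerivAt_iff_isLittleO_nhds_zero.2 ?_
  refine Asymptotics.IsBigO.trans_isLittleO (g := fun H : Matrix (Fin N) (Fin N) ℝ => ‖H‖ ^ 2)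
    (Asymptotics.IsBigO.of_bound ‖M‖ (Filter.Eventually.of_forall fun H => ?_))
    (Asymptotics.isLittleO_norm_pow_id one_lt_two)
  have h : frobInner M ((V + H)ᵀ * (V + H)) - frobInner M (Vᵀ * V) -
      ((2 : ℝ) • frobInnerCLM (V * M)) H = frobInner M (Hᵀ * H) := by
    rw [frobInner_gram_add hM]
    simp only [_root_.smul_apply, frobInnerCLM_apply, smul_eq_mul]
    ring
  rw [norm_pow, norm_norm]
  exact (congrArg norm h).trans_le (abs_frobInner_gram_le M H)

lemma frobInner_comm {N : ℕ} (X Y : Matrix (Fin N) (Fin N) ℝ) :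
    frobInner X Y = frobInner Y X := by
  simp only [frobInner_eq_sum, mul_comm]

lemma hasFDerivAt_penalizedLagrangian {N F : ℕ} {C : Matrix (Fin N) (Fin N) ℝ}
    {A : Fin F → Matrix (Fin N) (Fin N) ℝ} (hC : C.IsSymm) (hA : ∀ i, (A i).IsSymm)
    (b : Fin F → ℝ) (ρ : ℝ) (V : Matrix (Fin N) (Fin N) ℝ) :
    HasFDerivAt (penalizedLagrangian C A b ρ) (frobInnerCLM (penalizedGrad C A b ρ V)) V := by
  have h : HasFDerivAt (penalizedLagrangian C A b ρ)
      ((2 : ℝ) • frobInnerCLM (V * C) + ρ • ∑ i,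
        (2 • (frobInner (A i) (Vᵀ * V) - b i) ^ (2 - 1)) • (2 : ℝ) • frobInnerCLM (V * A i)) V :=
    (hasFDerivAt_frobInner_gram hC V).add
      ((HasFDerivAt.fun_sum (u := Finset.univ) fun i _ =>
        ((hasFDerivAt_frobInner_gram (hA i) V).sub_const (b i)).pow 2).const_mul ρ)
  refine h.congr_fderiv ?_
  ext1 H
  rw [frobInnerCLM_apply, frobInner_comm, ← frobInnerCLM_apply]
  simp only [penalizedGrad, map_add, map_smul, map_sum, frobInnerCLM_apply, frobInner_comm H]
  simp only [_root_.add_apply, _root_.smul_apply, _root_.sum_apply, frobInnerCLM_apply, smul_eq_mul,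
    Finset.mul_sum]
  congr 1
  refine Finset.sum_congr rfl fun i _ => ?_
  simp
  ring

lemma abs_frobInner_gram_sub_le {N : ℕ} (M : Matrix (Fin N) (Fin N) ℝ) {B : ℝ}
    {V W : Matrix (Fin N) (Fin N) ℝ} (hV : ‖V‖ ≤ B) (hW : ‖W‖ ≤ B) :
    |frobInner M (Vᵀ * V) - frobInner M (Wᵀ * W)| ≤ ‖M‖ * (2 * B * ‖V - W‖) := by
  have h : Vᵀ * V - Wᵀ * W = Vᵀ * (V - W) + (V - W)ᵀ * W := by
    rw [Matrix.transpose_sub]; noncomm_ring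
  rw [← frobInnerCLM_apply, ← frobInnerCLM_apply, ← map_sub, frobInnerCLM_apply, h]
  refine (abs_frobInner_le _ _).trans ?_
  gcongr
  calc ‖Vᵀ * (V - W) + (V - W)ᵀ * W‖
      ≤ ‖Vᵀ‖ * ‖V - W‖ + ‖(V - W)ᵀ‖ * ‖W‖ :=
        norm_add_le_of_le (Matrix.frobenius_norm_mul _ _) (Matrix.frobenius_norm_mul _ _)
    _ = ‖V‖ * ‖V - W‖ + ‖V - W‖ * ‖W‖ := by
        rw [Matrix.frobenius_norm_transpose, Matrix.frobenius_norm_transpose]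
    _ ≤ B * ‖V - W‖ + ‖V - W‖ * B := by gcongr
    _ = 2 * B * ‖V - W‖ := by ring

lemma norm_penaltyTerm_sub_le {N : ℕ} (M : Matrix (Fin N) (Fin N) ℝ) (β : ℝ) {B : ℝ}
    {V W : Matrix (Fin N) (Fin N) ℝ} (hV : ‖V‖ ≤ B) (hW : ‖W‖ ≤ B) :
    ‖(frobInner M (Vᵀ * V) - β) • (V * M) - (frobInner M (Wᵀ * W) - β) • (W * M)‖ ≤
      (3 * B ^ 2 * ‖M‖ ^ 2 + |β| * ‖M‖) * ‖V - W‖ := by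
  have hB : 0 ≤ B := (norm_nonneg V).trans hV
  have h : (frobInner M (Vᵀ * V) - β) • (V * M) - (frobInner M (Wᵀ * W) - β) • (W * M) =
      (frobInner M (Vᵀ * V) - frobInner M (Wᵀ * W)) • (V * M) +
        (frobInner M (Wᵀ * W) - β) • ((V - W) * M) := by
    rw [Matrix.sub_mul]; module
  have hβ : |frobInner M (Wᵀ * W) - β| ≤ ‖M‖ * B ^ 2 + |β| := by
    refine (abs_sub _ _).trans ?_
    have := abs_frobInner_gram_le M W
    gcongr
    exact this.trans (by gcongr)
  rw [h]
  calc _ ≤ |frobInner M (Vᵀ * V) - frobInner M (Wᵀ * W)| * (‖V‖ * ‖M‖) +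
        |frobInner M (Wᵀ * W) - β| * (‖V - W‖ * ‖M‖) := by
        refine norm_add_le_of_le ?_ ?_ <;> rw [norm_smul, Real.norm_eq_abs] <;>
          exact mul_le_mul_of_nonneg_left (Matrix.frobenius_norm_mul _ _) (abs_nonneg _)
    _ ≤ (‖M‖ * (2 * B * ‖V - W‖)) * (B * ‖M‖) + (‖M‖ * B ^ 2 + |β|) * (‖V - W‖ * ‖M‖) := by
        gcongr
        exact abs_frobInner_gram_sub_le M hV hW
    _ = _ := by ring

lemma norm_penalizedGrad_sub_le {N F : ℕ} (C : Matrix (Fin N) (Fin N) ℝ)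
    (A : Fin F → Matrix (Fin N) (Fin N) ℝ) (b : Fin F → ℝ) {ρ : ℝ} (hρ : 0 ≤ ρ) {B : ℝ}
    {V W : Matrix (Fin N) (Fin N) ℝ} (hV : ‖V‖ ≤ B) (hW : ‖W‖ ≤ B) :
    ‖penalizedGrad C A b ρ V - penalizedGrad C A b ρ W‖ ≤
      (2 * ‖C‖ + 4 * ρ * ∑ i, (3 * B ^ 2 * ‖A i‖ ^ 2 + |b i| * ‖A i‖)) * ‖V - W‖ := by
  have h : penalizedGrad C A b ρ V - penalizedGrad C A b ρ W =
      (2 : ℝ) • ((V - W) * C) + (4 * ρ) • ∑ i, ((frobInner (A i) (Vᵀ * V) - b i) • (V * A i) -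
        (frobInner (A i) (Wᵀ * W) - b i) • (W * A i)) := by
    rw [penalizedGrad, penalizedGrad, Finset.sum_sub_distrib, Matrix.sub_mul]; module
  rw [h, add_mul, mul_assoc (4 * ρ), Finset.sum_mul]
  refine norm_add_le_of_le ?_ ?_
  · rw [norm_smul, Real.norm_two, mul_assoc, mul_comm ‖C‖]
    gcongr
    exact Matrix.frobenius_norm_mul _ _
  · rw [norm_smul, Real.norm_of_nonneg (by positivity)]
    gcongr
    exact norm_sum_le_of_le _ fun i _ => norm_penaltyTerm_sub_le (A i) (b i) hV hW

/-- the penalized Lagrangian is differentiable with gradient `G(V)`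
(w.r.t. the Frobenius inner product), and `G` is Lipschitz on Frobenius-norm balls
with an explicit constant. -/
theorem penalizedLagrangian_gradient_and_lipschitz
    {N F : ℕ} (C : Matrix (Fin N) (Fin N) ℝ) (A : Fin F → Matrix (Fin N) (Fin N) ℝ)
    (hC : C.IsSymm) (hA : ∀ i, (A i).IsSymm)
    (b : Fin F → ℝ) (ρ : ℝ) (hρ : 0 ≤ ρ) (B : ℝ) (hB : 0 ≤ B) :
    (∀ V : Matrix (Fin N) (Fin N) ℝ,
      DifferentiableAt ℝ (penalizedLagrangian C A b ρ) V ∧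
      ∀ H : Matrix (Fin N) (Fin N) ℝ,
        fderiv ℝ (penalizedLagrangian C A b ρ) V H = frobInner (penalizedGrad C A b ρ V) H)
    ∧
    (∀ V V' : Matrix (Fin N) (Fin N) ℝ, ‖V‖ ≤ B → ‖V'‖ ≤ B →
      ‖penalizedGrad C A b ρ V - penalizedGrad C A b ρ V'‖ ≤
        (2 * ‖C‖ + 4 * ρ * ∑ i, (3 * B ^ 2 * ‖A i‖ ^ 2 + |b i| * ‖A i‖)) * ‖V - V'‖) := by
  exact ⟨fun V =>
    have h := hasFDerivAt_penalizedLagrangian hC hA b ρ V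
    ⟨h.differentiableAt, fun H => by rw [h.fderiv, frobInnerCLM_apply]⟩,
    fun V V' hV hV' => norm_penalizedGrad_sub_le C A b hρ hV hV'⟩
end

section
/- Let r be a positive integer and B ≥ 0. Define T : (ℝ^r)⁴ → ℝ by T(v_1, v_2, v_3, v_4) := (⟨v_1, v_2⟩ − ⟨v_3, v_4⟩)², where (ℝ^r)⁴ carries the Euclidean (ℓ²) product norm. Then T is twice continuously differentiable, and on the convex set S := {(v_1, v_2, v_3, v_4) : ‖v_i‖ ≤ B for each i = 1,…,4}, the second-derivative map v ↦ D²T(v) is Lipschitz with constant 12B; that is, ‖D²T(v) − D²T(v̂)‖ ≤ 12B·‖v − v̂‖ for all v, v̂ ∈ S, where the norm on second derivatives is the operator norm on continuous bilinear maps. -/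
open BigOperators

/-- `T(v₁,v₂,v₃,v₄) = (⟨v₁,v₂⟩ - ⟨v₃,v₄⟩)²`, with the quadruple of vectors in `ℝ^r`
modeled as a single Euclidean vector indexed by `Fin 4 × Fin r` (so the ambient norm is
the Euclidean ℓ² product norm). -/
noncomputable def pairPenalty (r : ℕ) (v : EuclideanSpace ℝ (Fin 4 × Fin r)) : ℝ :=
  ((∑ j, v (0, j) * v (1, j)) - ∑ j, v (2, j) * v (3, j)) ^ 2

section QuadraticSquare

variable {E : Type*} [NormedAddCommGroup E] [NormedSpace ℝ E]

/-- The derivative of the quadratic form of a symmetric bounded bilinear form. -/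
lemma hasFDerivAt_bilin_self (b : E →L[ℝ] E →L[ℝ] ℝ) (hb : ∀ x y, b x y = b y x) (v : E) :
    HasFDerivAt (fun v => b v v) ((2 : ℝ) • b v) v := by
  refine (b.hasFDerivAt.clm_apply (hasFDerivAt_id v)).congr_fderiv
    (ContinuousLinearMap.ext fun h => ?_)
  simp [hb h v]
  ring

/-- The derivative of `v ↦ (b v v / 2) ^ 2` for a symmetric bounded bilinear form `b`. -/
lemma hasFDerivAt_sq_half_bilin (b : E →L[ℝ] E →L[ℝ] ℝ) (hb : ∀ x y, b x y = b y x) (v : E) :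
    HasFDerivAt (fun v => (b v v / 2) ^ 2) (b v v • b v) v := by
  have hq := hasFDerivAt_bilin_self b hb v
  have hfun : (fun v => (b v v / 2) ^ 2) = fun v => 1 / 4 * (b v v * b v v) :=
    funext fun v => by ring
  rw [hfun]
  refine ((hq.fun_mul hq).const_mul (1 / 4 : ℝ)).congr_fderiv
    (ContinuousLinearMap.ext fun h => ?_)
  simp
  ring

/-- The second derivative of `v ↦ (b v v / 2) ^ 2` for a symmetric bounded bilinear form `b`. -/
lemma iteratedFDeriv_two_sq_half_bilin_apply (b : E →L[ℝ] E →L[ℝ] ℝ)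
    (hb : ∀ x y, b x y = b y x) (v : E) (m : Fin 2 → E) :
    iteratedFDeriv ℝ 2 (fun v => (b v v / 2) ^ 2) v m =
      2 * b v (m 0) * b v (m 1) + b v v * b (m 0) (m 1) := by
  have hfd : fderiv ℝ (fun v => (b v v / 2) ^ 2) = fun v => b v v • b v :=
    funext fun v => (hasFDerivAt_sq_half_bilin b hb v).fderiv
  have hq := hasFDerivAt_bilin_self b hb v
  rw [iteratedFDeriv_two_apply, hfd, (hq.fun_smul b.hasFDerivAt).fderiv]
  simp
  ring

/-- On the ball of radius `R`, the Hessian of `v ↦ (b v v / 2) ^ 2` is `6 * R`-Lipschitz when `b`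
is a symmetric bilinear form of norm at most one. -/
lemma norm_iteratedFDeriv_two_sq_half_bilin_sub_le (b : E →L[ℝ] E →L[ℝ] ℝ)
    (hb : ∀ x y, b x y = b y x) (hb_norm : ‖b‖ ≤ 1) {R : ℝ} {v w : E}
    (hv : ‖v‖ ≤ R) (hw : ‖w‖ ≤ R) :
    ‖iteratedFDeriv ℝ 2 (fun v => (b v v / 2) ^ 2) v -
        iteratedFDeriv ℝ 2 (fun v => (b v v / 2) ^ 2) w‖ ≤ 6 * R * ‖v - w‖ := by
  have hR : 0 ≤ R := (norm_nonneg v).trans hv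
  have hle : ∀ x y, |b x y| ≤ ‖x‖ * ‖y‖ := fun x y => by
    calc |b x y| ≤ ‖b‖ * ‖x‖ * ‖y‖ := b.le_opNorm₂ x y
      _ ≤ 1 * ‖x‖ * ‖y‖ := by gcongr
      _ = ‖x‖ * ‖y‖ := by ring
  refine ContinuousMultilinearMap.opNorm_le_bound (by positivity) fun m => ?_
  rw [sub_apply, iteratedFDeriv_two_sq_half_bilin_apply b hb,
    iteratedFDeriv_two_sq_half_bilin_apply b hb, Fin.prod_univ_two, Real.norm_eq_abs]
  have hsplit : 2 * b v (m 0) * b v (m 1) + b v v * b (m 0) (m 1) -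
      (2 * b w (m 0) * b w (m 1) + b w w * b (m 0) (m 1)) =
      2 * (b (v - w) (m 0) * b v (m 1)) + 2 * (b w (m 0) * b (v - w) (m 1)) +
        b (v - w) (v + w) * b (m 0) (m 1) := by
    simp only [map_sub, map_add, sub_apply, hb w v]
    ring
  rw [hsplit]
  have hvw : ‖v + w‖ ≤ 2 * R := (norm_add_le v w).trans (by linarith)
  calc _ ≤ 2 * (|b (v - w) (m 0)| * |b v (m 1)|) + 2 * (|b w (m 0)| * |b (v - w) (m 1)|) +
        |b (v - w) (v + w)| * |b (m 0) (m 1)| := by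
        refine (abs_add_three _ _ _).trans_eq ?_
        simp [abs_mul]
    _ ≤ 2 * ((‖v - w‖ * ‖m 0‖) * (R * ‖m 1‖)) + 2 * ((R * ‖m 0‖) * (‖v - w‖ * ‖m 1‖)) +
        (‖v - w‖ * (2 * R)) * (‖m 0‖ * ‖m 1‖) := by
        gcongr
        · exact hle _ _
        · exact (hle _ _).trans (by gcongr)
        · exact (hle _ _).trans (by gcongr)
        · exact hle _ _
        · exact (hle _ _).trans (by gcongr)
        · exact hle _ _
    _ = 6 * R * ‖v - w‖ * (‖m 0‖ * ‖m 1‖) := by ring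

end QuadraticSquare

/-- The polarization of `v ↦ 2 * (⟨v₀, v₁⟩ - ⟨v₂, v₃⟩)`, as an algebraic bilinear form. -/
noncomputable def pairFormLin (r : ℕ) :
    EuclideanSpace ℝ (Fin 4 × Fin r) →ₗ[ℝ] EuclideanSpace ℝ (Fin 4 × Fin r) →ₗ[ℝ] ℝ :=
  LinearMap.mk₂ ℝ
    (fun x y => ∑ j, (x (0, j) * y (1, j) + x (1, j) * y (0, j)
      - x (2, j) * y (3, j) - x (3, j) * y (2, j)))
    (fun x x' y => by
      rw [← Finset.sum_add_distrib]
      exact Finset.sum_congr rfl fun j _ => by simp only [PiLp.add_apply]; ring)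
    (fun c x y => by
      rw [smul_eq_mul, Finset.mul_sum]
      exact Finset.sum_congr rfl fun j _ => by simp only [PiLp.smul_apply, smul_eq_mul]; ring)
    (fun x y y' => by
      rw [← Finset.sum_add_distrib]
      exact Finset.sum_congr rfl fun j _ => by simp only [PiLp.add_apply]; ring)
    (fun c x y => by
      rw [smul_eq_mul, Finset.mul_sum]
      exact Finset.sum_congr rfl fun j _ => by simp only [PiLp.smul_apply, smul_eq_mul]; ring)

lemma pairFormLin_apply (r : ℕ) (x y : EuclideanSpace ℝ (Fin 4 × Fin r)) :
    pairFormLin r x y = ∑ j, (x (0, j) * y (1, j) + x (1, j) * y (0, j)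
      - x (2, j) * y (3, j) - x (3, j) * y (2, j)) := rfl

lemma EuclideanSpace.norm_sq_eq_sum_blocks {r : ℕ} (x : EuclideanSpace ℝ (Fin 4 × Fin r)) :
    ‖x‖ ^ 2 = ∑ j, x (0, j) ^ 2 + ∑ j, x (1, j) ^ 2 + ∑ j, x (2, j) ^ 2 + ∑ j, x (3, j) ^ 2 := by
  rw [EuclideanSpace.real_norm_sq_eq, Fintype.sum_prod_type, Fin.sum_univ_four]

lemma norm_pairFormLin_le (r : ℕ) (x y : EuclideanSpace ℝ (Fin 4 × Fin r)) :
    ‖pairFormLin r x y‖ ≤ 1 * ‖x‖ * ‖y‖ := by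
  let z : EuclideanSpace ℝ (Fin 4 × Fin r) := WithLp.toLp 2 fun p =>
    (![y (1, p.2), y (0, p.2), -y (3, p.2), -y (2, p.2)] : Fin 4 → ℝ) p.1
  have hz : ‖z‖ = ‖y‖ := by
    rw [← sq_eq_sq₀ (norm_nonneg _) (norm_nonneg _), EuclideanSpace.norm_sq_eq_sum_blocks,
      EuclideanSpace.norm_sq_eq_sum_blocks]
    simp [z]
    ring
  have hxz : pairFormLin r x y = inner ℝ x z := by
    rw [pairFormLin_apply, PiLp.inner_apply, Fintype.sum_prod_type, Fin.sum_univ_four,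
      ← Finset.sum_add_distrib, ← Finset.sum_add_distrib, ← Finset.sum_add_distrib]
    refine Finset.sum_congr rfl fun j _ => ?_
    simp [z]
    ring
  rw [hxz, one_mul, ← hz]
  exact norm_inner_le_norm x z

/-- The polarization of `v ↦ 2 * (⟨v₀, v₁⟩ - ⟨v₂, v₃⟩)`, as a bounded bilinear form. -/
noncomputable def pairForm (r : ℕ) :
    EuclideanSpace ℝ (Fin 4 × Fin r) →L[ℝ] EuclideanSpace ℝ (Fin 4 × Fin r) →L[ℝ] ℝ :=
  (pairFormLin r).mkContinuous₂ 1 (norm_pairFormLin_le r)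

lemma pairForm_apply (r : ℕ) (x y : EuclideanSpace ℝ (Fin 4 × Fin r)) :
    pairForm r x y = ∑ j, (x (0, j) * y (1, j) + x (1, j) * y (0, j)
      - x (2, j) * y (3, j) - x (3, j) * y (2, j)) := rfl

lemma pairForm_comm (r : ℕ) (x y : EuclideanSpace ℝ (Fin 4 × Fin r)) :
    pairForm r x y = pairForm r y x := by
  rw [pairForm_apply, pairForm_apply]
  exact Finset.sum_congr rfl fun j _ => by ring

lemma norm_pairForm_le (r : ℕ) : ‖pairForm r‖ ≤ 1 :=
  LinearMap.mkContinuous₂_norm_le _ zero_le_one _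

lemma pairPenalty_eq_sq_half_pairForm (r : ℕ) :
    pairPenalty r = fun v => (pairForm r v v / 2) ^ 2 := by
  ext v
  rw [pairPenalty, pairForm_apply, ← Finset.sum_sub_distrib, Finset.sum_div]
  congr 1
  exact Finset.sum_congr rfl fun j _ => by ring

lemma EuclideanSpace.norm_le_two_mul_of_blocks_le {r : ℕ} {B : ℝ} (hB : 0 ≤ B)
    {v : EuclideanSpace ℝ (Fin 4 × Fin r)}
    (hv : ∀ i : Fin 4, Real.sqrt (∑ j, v (i, j) ^ 2) ≤ B) : ‖v‖ ≤ 2 * B := by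
  have hsq : ∀ i : Fin 4, ∑ j, v (i, j) ^ 2 ≤ B ^ 2 := fun i => (Real.sqrt_le_left hB).1 (hv i)
  refine (sq_le_sq₀ (norm_nonneg v) (by positivity)).1 ?_
  rw [EuclideanSpace.norm_sq_eq_sum_blocks]
  linarith [hsq 0, hsq 1, hsq 2, hsq 3]

/-- `T` is twice continuously differentiable and its second derivative is
`12B`-Lipschitz on the set where each of the four component vectors has norm at most `B`. -/
theorem pairPenalty_contDiff_and_hessian_lipschitz
    (r : ℕ) (hr : 0 < r) (B : ℝ) (hB : 0 ≤ B) :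
    ContDiff ℝ 2 (pairPenalty r) ∧
    ∀ v v' : EuclideanSpace ℝ (Fin 4 × Fin r),
      (∀ i : Fin 4, Real.sqrt (∑ j, v (i, j) ^ 2) ≤ B) →
      (∀ i : Fin 4, Real.sqrt (∑ j, v' (i, j) ^ 2) ≤ B) →
      ‖iteratedFDeriv ℝ 2 (pairPenalty r) v - iteratedFDeriv ℝ 2 (pairPenalty r) v'‖ ≤
        12 * B * ‖v - v'‖ := by
  rw [pairPenalty_eq_sq_half_pairForm]
  refine ⟨by fun_prop, fun v v' hv hv' => ?_⟩
  refine (norm_iteratedFDeriv_two_sq_half_bilin_sub_le (pairForm r) (pairForm_comm r)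
    (norm_pairForm_le r) (EuclideanSpace.norm_le_two_mul_of_blocks_le hB hv)
    (EuclideanSpace.norm_le_two_mul_of_blocks_le hB hv')).trans_eq ?_
  ring
end

section
/- Let C, A_1, …, A_F (F ≥ 1) be real N×N matrices, b ∈ ℝ^F, ρ > 0, and κ ≥ 0. Define H_ρ(X) := ⟨C, X⟩ + ρ·Σ_{i=1}^F (⟨A_i, X⟩ − b_i)², and for a matrix X̃ write τ_i := |⟨A_i, X̃⟩ − b_i|. Suppose X* is a matrix satisfying ⟨A_i, X*⟩ = b_i for all i, that H_ρ(X̃) ≤ H_ρ(X*), and that the robustness bound ⟨C, X* − X̃⟩ ≤ κ·√((1/F)·Σ_{i=1}^F τ_i) holds. Then the average squared constraint violation satisfies (1/F)·Σ_{i=1}^F τ_i² ≤ (κ/(ρF))^{4/3}. -/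
open Matrix BigOperators

/-- The quadratically penalized objective `H_ρ(X) = ⟨C,X⟩ + ρ Σ_i (⟨A_i,X⟩ - b_i)²`. -/
noncomputable def penalizedObj {N F : ℕ} (C : Matrix (Fin N) (Fin N) ℝ)
    (A : Fin F → Matrix (Fin N) (Fin N) ℝ) (b : Fin F → ℝ) (ρ : ℝ)
    (X : Matrix (Fin N) (Fin N) ℝ) : ℝ :=
  frobInner C X + ρ * ∑ i, (frobInner (A i) X - b i) ^ 2

theorem frobInner_sub {N : ℕ} (A X Y : Matrix (Fin N) (Fin N) ℝ) :
    frobInner A (X - Y) = frobInner A X - frobInner A Y := by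
  simp [frobInner, Matrix.mul_sub]

/-- If `s ≤ c √m` and `m² ≤ s`, then `s ≤ c ^ (4/3)`. -/
theorem le_rpow_four_thirds_of_le_mul_sqrt {s m c : ℝ} (hm : 0 ≤ m) (hc : 0 ≤ c)
    (hms : m ^ 2 ≤ s) (hs : s ≤ c * √m) : s ≤ c ^ ((4 : ℝ) / 3) := by
  have hs0 : 0 ≤ s := (sq_nonneg m).trans hms
  have hcube : s ^ 3 ≤ c ^ 4 := by
    rcases hs0.eq_or_lt with rfl | hpos
    · simpa using pow_nonneg hc 4
    · refine le_of_mul_le_mul_right ?_ hpos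
      calc s ^ 3 * s = s ^ 4 := by ring
        _ ≤ (c * √m) ^ 4 := pow_le_pow_left₀ hs0 hs 4
        _ = c ^ 4 * (√m ^ 2) ^ 2 := by ring
        _ = c ^ 4 * m ^ 2 := by rw [Real.sq_sqrt hm]
        _ ≤ c ^ 4 * s := by gcongr
  refine le_of_pow_le_pow_left₀ three_ne_zero (by positivity) (hcube.trans_eq ?_)
  rw [← Real.rpow_natCast (c ^ ((4 : ℝ) / 3)), ← Real.rpow_mul hc, ← Real.rpow_natCast c]
  norm_num

/-- under the square-root robustness bound, a point at least as good as a
feasible point for the penalized objective has average squared constraint violation at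
most `(κ/(ρF))^{4/3}`. -/
theorem average_violation_bound
    {N F : ℕ} (hF : 1 ≤ F)
    (C : Matrix (Fin N) (Fin N) ℝ) (A : Fin F → Matrix (Fin N) (Fin N) ℝ)
    (b : Fin F → ℝ) (ρ κ : ℝ) (hρ : 0 < ρ) (hκ : 0 ≤ κ)
    (Xstar Xt : Matrix (Fin N) (Fin N) ℝ)
    (hfeas : ∀ i, frobInner (A i) Xstar = b i)
    (hle : penalizedObj C A b ρ Xt ≤ penalizedObj C A b ρ Xstar)
    (hrobust : frobInner C (Xstar - Xt) ≤
      κ * Real.sqrt ((1 / F : ℝ) * ∑ i, |frobInner (A i) Xt - b i|)) :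
    (1 / F : ℝ) * ∑ i, |frobInner (A i) Xt - b i| ^ 2 ≤
      (κ / (ρ * F)) ^ ((4 : ℝ) / 3) := by
  have hF' : (0 : ℝ) < F := by exact_mod_cast hF
  refine le_rpow_four_thirds_of_le_mul_sqrt
    (m := (1 / F : ℝ) * ∑ i, |frobInner (A i) Xt - b i|) (by positivity) (by positivity) ?_ ?_
  · have h := sq_sum_le_card_mul_sum_sq (s := Finset.univ)
      (f := fun i => |frobInner (A i) Xt - b i|)
    rw [Finset.card_univ, Fintype.card_fin] at h
    rw [mul_pow]
    calc (1 / F : ℝ) ^ 2 * (∑ i, |frobInner (A i) Xt - b i|) ^ 2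
        ≤ (1 / F : ℝ) ^ 2 * (F * ∑ i, |frobInner (A i) Xt - b i| ^ 2) := by gcongr
      _ = (1 / F : ℝ) * ∑ i, |frobInner (A i) Xt - b i| ^ 2 := by field_simp
  · simp only [penalizedObj, hfeas, sub_self, ne_eq, OfNat.ofNat_ne_zero, not_false_eq_true,
      zero_pow, Finset.sum_const_zero, mul_zero, add_zero] at hle
    rw [frobInner_sub] at hrobust
    simp only [sq_abs]
    have h : ρ * ∑ i, (frobInner (A i) Xt - b i) ^ 2 ≤
        κ * √((1 / F : ℝ) * ∑ i, |frobInner (A i) Xt - b i|) := by linarith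
    rw [div_mul_eq_mul_div κ, le_div_iff₀ (by positivity)]
    refine le_of_eq_of_le ?_ h
    field_simp
end
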